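/- Let c ∈ ℂ and φ_c(w) = −exp(−2πi(w + τ − c)). Every holomorphic function F : ℂ → Mat_n(ℂ) satisfying F(w+1) = X F(w) X^{−1} and F(w+τ) = φ_c(w) · Y F(w) Y^{−1} for all w ∈ ℂ can be written uniquely as F(w) = ∑_{(k,l) ∈ {1,…,n}²} λ_{(k,l)} · f_{(k,l)}(w) · Z_{(k,l)} with coefficients λ_{(k,l)} ∈ ℂ, where f_{(k,l)}(w) = exp(−2πi d k w / n) · θ(w + (1+τ)/2 − c − (d/n)(kτ − l)); in particular the ℂ-vector space of such functions F has dimension n². -/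

import Mathlib

open Complex Matrix
open scoped Kronecker

noncomputable section

/-- `ε = exp(2πi d/n)`. -/
def eps (n d : ℕ) : ℂ := Complex.exp (2 * Real.pi * Complex.I * d / n)

/-- The diagonal matrix `X = diag(1, ε, ε², …, ε^{n−1})`. -/
def Xmat (n d : ℕ) : Matrix (Fin n) (Fin n) ℂ :=
  Matrix.diagonal fun i => eps n d ^ (i : ℕ)

/-- The cyclic shift matrix `Y` with `Y_{i,j} = 1` iff `j ≡ i+1 (mod n)`. -/
def Ymat (n : ℕ) : Matrix (Fin n) (Fin n) ℂ :=
  Matrix.of fun i j => if (j : ℕ) = ((i : ℕ) + 1) % n then 1 else 0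

/-- `Z_{(k,l)} = Y^k X^{−l}`. -/
def Zmat (n d : ℕ) (k l : ℕ) : Matrix (Fin n) (Fin n) ℂ :=
  Ymat n ^ k * (Xmat n d)⁻¹ ^ l

/-- `Z^∨_{(k,l)} = (1/n) X^l Y^{−k}`. -/
def Zdual (n d : ℕ) (k l : ℕ) : Matrix (Fin n) (Fin n) ℂ :=
  (n : ℂ)⁻¹ • (Xmat n d ^ l * (Ymat n)⁻¹ ^ k)

/-- The third Jacobi theta function `θ(z) = ∑_{m ∈ ℤ} exp(πiτm² + 2πimz)`. -/
def theta3 (τ z : ℂ) : ℂ :=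
  ∑' m : ℤ, Complex.exp (Real.pi * Complex.I * τ * (m : ℂ) ^ 2 +
    2 * Real.pi * Complex.I * (m : ℂ) * z)

/-- The first Jacobi theta function
`θ̄(z) = 2 exp(πiτ/4) ∑_{m ≥ 0} (−1)^m exp(πiτ m(m+1)) sin((2m+1)πz)`. -/
def theta1 (τ z : ℂ) : ℂ :=
  2 * Complex.exp (Real.pi * Complex.I * τ / 4) *
    ∑' m : ℕ, (-1 : ℂ) ^ m * Complex.exp (Real.pi * Complex.I * τ * (m : ℂ) * ((m : ℂ) + 1)) *
      Complex.sin ((2 * (m : ℂ) + 1) * Real.pi * z)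

/-- The Kronecker elliptic function `σ(u, z) = θ̄′(0) θ̄(u+z) / (θ̄(u) θ̄(z))`. -/
def sigmaK (τ u z : ℂ) : ℂ :=
  deriv (theta1 τ) 0 * theta1 τ (u + z) / (theta1 τ u * theta1 τ z)

/-- `f_{(k,l)}(w) = exp(−2πi d k w/n) θ(w + (1+τ)/2 − c − (d/n)(kτ − l))`. -/
def fTwist (n d : ℕ) (τ c : ℂ) (k l : ℕ) (w : ℂ) : ℂ :=
  Complex.exp (-(2 * Real.pi * Complex.I) * d * k * w / n) *
    theta3 τ (w + (1 + τ) / 2 - c - ((d : ℂ) / n) * (k * τ - l))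

/-- The matrix-valued functional equations: `F` is holomorphic entrywise,
`F(w+1) = X F(w) X⁻¹` and `F(w+τ) = φ_c(w) Y F(w) Y⁻¹`. -/
def SolPred (n d : ℕ) (τ c : ℂ) (F : ℂ → Matrix (Fin n) (Fin n) ℂ) : Prop :=
  (∀ i j : Fin n, Differentiable ℂ fun w => F w i j) ∧
  (∀ w : ℂ, F (w + 1) = Xmat n d * F w * (Xmat n d)⁻¹) ∧
  (∀ w : ℂ, F (w + τ)
    = (-Complex.exp (-(2 * Real.pi * Complex.I) * (w + τ - c))) •
        (Ymat n * F w * (Ymat n)⁻¹))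

/-!
Since `Y X = ε X Y`, conjugation by `X` and by `Y` multiplies `Z_{(k,l)}` by `ε^{-k}` and `ε^{-l}`.
As `ε` is a primitive `n`-th root of unity, these pairs of eigenvalues are distinct, so the trace
pairing of `Z^∨_{(k,l)}` with the other `Z_{(k',l')}` vanishes and the `Z_{(k,l)}` form a basis
of `Mat_n(ℂ)`. The equations for `F` therefore decouple: each coordinate of `F` is an entire
function satisfying the same two scalar equations as `f_{(k,l)}`. A translation and an exponential
factor turn these into the equations of `θ`. For an entire solution of the latter, moving the
contour of the `m`-th Fourier coefficient from the real axis up to `τ` expresses it through the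
`(m+1)`-st, so the solution is determined by its zeroth coefficient and is a multiple of `θ`.
-/

open scoped Real Topology
open Module (Basis)

section QCommute

variable {R A : Type*} [CommSemiring R] [Semiring A] [Algebra R A]

/-- The relation `xy = q yx` of the quantum plane, for a scalar `q`. -/
def QCommute (q : R) (x y : A) : Prop :=
  x * y = q • (y * x)

namespace QCommute

theorem of_commute {x y : A} (h : Commute x y) : QCommute (1 : R) x y := by
  rw [QCommute, one_smul, h.eq]

theorem mul_right {q r : R} {x y z : A} (hy : QCommute q x y) (hz : QCommute r x z) :
    QCommute (q * r) x (y * z) := by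
  rw [QCommute] at *
  rw [← mul_assoc, hy, smul_mul_assoc, mul_assoc, hz, mul_smul_comm, smul_smul, mul_assoc]

theorem pow_right {q : R} {x y : A} (h : QCommute q x y) (k : ℕ) :
    QCommute (q ^ k) x (y ^ k) := by
  induction k with
  | zero => simp only [pow_zero, of_commute (Commute.one_right x)]
  | succ k ih => simpa only [pow_succ] using ih.mul_right h

theorem symm {K : Type*} [Semifield K] [Algebra K A] {q : K} (hq : q ≠ 0) {x y : A}
    (h : QCommute q x y) : QCommute q⁻¹ y x := by
  rw [QCommute] at *
  rw [h, smul_smul, inv_mul_cancel₀ hq, one_smul]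

end QCommute

end QCommute

namespace QCommute

variable {K ι : Type*} [Field K] [Fintype ι] [DecidableEq ι] {q : K} {A B : Matrix ι ι K}

theorem conj_eq_smul (h : QCommute q A B) (hA : IsUnit A) : A * B * A⁻¹ = q • B := by
  have hA' : A * A⁻¹ = 1 := A.mul_nonsing_inv ((A.isUnit_iff_isUnit_det).1 hA)
  rw [h, smul_mul_assoc, mul_assoc, hA', mul_one]

theorem inv_right (hq : q ≠ 0) (h : QCommute q A B) (hB : IsUnit B) : QCommute q⁻¹ A B⁻¹ := by
  have hB' : B⁻¹ * B = 1 := B.nonsing_inv_mul ((B.isUnit_iff_isUnit_det).1 hB)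
  have hconj : B * A * B⁻¹ = q⁻¹ • A := (h.symm hq).conj_eq_smul hB
  calc A * B⁻¹ = B⁻¹ * (B * A * B⁻¹) := by simp only [← mul_assoc, hB', one_mul]
    _ = q⁻¹ • (B⁻¹ * A) := by rw [hconj, mul_smul_comm]

theorem trace_eq_zero (h : QCommute q A B) (hA : IsUnit A) (hq : q ≠ 1) : B.trace = 0 := by
  have htrace : q * B.trace = B.trace := by
    rw [← smul_eq_mul, ← trace_smul, ← h.conj_eq_smul hA, trace_conj hA]
  exact (mul_left_eq_self₀.1 htrace).resolve_left hq

end QCommute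

section ClockShift

variable {n d : ℕ}

theorem isPrimitiveRoot_eps (hn : n ≠ 0) (hcop : Nat.gcd d n = 1) :
    IsPrimitiveRoot (eps n d) n := by
  simpa only [eps, mul_div_assoc] using isPrimitiveRoot_exp_of_coprime d n hn hcop

theorem eps_pow_self (n d : ℕ) : eps n d ^ n = 1 := by
  rcases eq_or_ne n 0 with rfl | hn
  · rw [pow_zero]
  rw [eps, ← exp_nat_mul, mul_div_cancel₀ _ (Nat.cast_ne_zero.2 hn), mul_comm]
  exact exp_nat_mul_two_pi_mul_I d

theorem eps_ne_zero (n d : ℕ) : eps n d ≠ 0 :=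
  exp_ne_zero _

theorem eps_inv_pow (n d k : ℕ) :
    (eps n d)⁻¹ ^ k = exp (-(2 * π * I) * (d * k / n)) := by
  rw [eps, ← exp_neg, ← exp_nat_mul]
  congr 1
  ring

theorem isUnit_Xmat (n d : ℕ) : IsUnit (Xmat n d) := by
  rw [isUnit_iff_isUnit_det, Xmat, det_diagonal, isUnit_iff_ne_zero]
  exact Finset.prod_ne_zero_iff.2 fun i _ => pow_ne_zero _ (eps_ne_zero n d)

theorem Ymat_eq_permMatrix_finRotate (n : ℕ) : Ymat n = (finRotate n).permMatrix ℂ := by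
  ext i j
  have := i.neZero
  simp [Ymat, Equiv.Perm.permMatrix, PEquiv.toMatrix_apply, Fin.ext_iff, Fin.val_add, eq_comm]

theorem isUnit_Ymat (n : ℕ) : IsUnit (Ymat n) := by
  rw [isUnit_iff_isUnit_det, Ymat_eq_permMatrix_finRotate, det_permutation]
  exact (Int.cast_ne_zero.2 (Units.ne_zero _)).isUnit

theorem isUnit_Zmat (n d k l : ℕ) : IsUnit (Zmat n d k l) :=
  ((isUnit_Ymat n).pow k).mul ((isUnit_nonsing_inv_iff.2 (isUnit_Xmat n d)).pow l)

theorem qCommute_Ymat_Xmat (n d : ℕ) : QCommute (eps n d) (Ymat n) (Xmat n d) := by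
  ext i j
  simp only [Xmat, mul_diagonal, Matrix.smul_apply, diagonal_mul, Ymat, of_apply, smul_eq_mul]
  split_ifs with hij
  · rw [hij, ← pow_eq_pow_mod _ (eps_pow_self n d), pow_succ]
    ring
  · simp only [zero_mul, mul_zero]

theorem qCommute_Xmat_Zmat (n d k l : ℕ) :
    QCommute ((eps n d)⁻¹ ^ k) (Xmat n d) (Zmat n d k l) := by
  have hXY : QCommute (eps n d)⁻¹ (Xmat n d) (Ymat n) :=
    (qCommute_Ymat_Xmat n d).symm (eps_ne_zero n d)
  have hXX : QCommute (1 : ℂ)⁻¹ (Xmat n d) (Xmat n d)⁻¹ :=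
    (QCommute.of_commute (Commute.refl _)).inv_right one_ne_zero (isUnit_Xmat n d)
  simpa only [Zmat, inv_one, one_pow, mul_one] using (hXY.pow_right k).mul_right (hXX.pow_right l)

theorem qCommute_Ymat_Zmat (n d k l : ℕ) :
    QCommute ((eps n d)⁻¹ ^ l) (Ymat n) (Zmat n d k l) := by
  have hYX : QCommute (eps n d)⁻¹ (Ymat n) (Xmat n d)⁻¹ :=
    (qCommute_Ymat_Xmat n d).inv_right (eps_ne_zero n d) (isUnit_Xmat n d)
  have hYY : QCommute (1 : ℂ) (Ymat n) (Ymat n ^ k) :=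
    QCommute.of_commute ((Commute.refl _).pow_right k)
  simpa only [Zmat, one_mul] using hYY.mul_right (hYX.pow_right l)

theorem Zdual_eq_smul_inv_Zmat (n d k l : ℕ) :
    Zdual n d k l = (n : ℂ)⁻¹ • (Zmat n d k l)⁻¹ := by
  have hX : (Xmat n d)⁻¹⁻¹ = Xmat n d :=
    nonsing_inv_nonsing_inv _ ((isUnit_iff_isUnit_det _).1 (isUnit_Xmat n d))
  rw [Zdual, Zmat, Matrix.mul_inv_rev, ← inv_pow', ← inv_pow', hX]

theorem trace_Zdual_mul_Zmat_self (hn : n ≠ 0) (k l : ℕ) :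
    (Zdual n d k l * Zmat n d k l).trace = 1 := by
  rw [Zdual_eq_smul_inv_Zmat, smul_mul_assoc,
    nonsing_inv_mul _ ((isUnit_iff_isUnit_det _).1 (isUnit_Zmat n d k l)), trace_smul, trace_one,
    Fintype.card_fin, smul_eq_mul, inv_mul_cancel₀ (Nat.cast_ne_zero.2 hn)]

theorem trace_Zdual_mul_Zmat_of_ne {k l k' l' : ℕ}
    (h : (eps n d)⁻¹ ^ k' ≠ (eps n d)⁻¹ ^ k ∨ (eps n d)⁻¹ ^ l' ≠ (eps n d)⁻¹ ^ l) :
    (Zdual n d k l * Zmat n d k' l').trace = 0 := by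
  have hε (m : ℕ) : (eps n d)⁻¹ ^ m ≠ 0 := pow_ne_zero m (inv_ne_zero (eps_ne_zero n d))
  have hZ := isUnit_Zmat n d k l
  rw [Zdual_eq_smul_inv_Zmat, smul_mul_assoc, trace_smul]
  suffices ((Zmat n d k l)⁻¹ * Zmat n d k' l').trace = 0 by rw [this, smul_zero]
  rcases h with hk | hl
  · refine (((qCommute_Xmat_Zmat n d k l).inv_right (hε k) hZ).mul_right
      (qCommute_Xmat_Zmat n d k' l')).trace_eq_zero (isUnit_Xmat n d) fun h => hk ?_
    exact (inv_mul_eq_one₀ (hε k)).1 h |>.symm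
  · refine (((qCommute_Ymat_Zmat n d k l).inv_right (hε l) hZ).mul_right
      (qCommute_Ymat_Zmat n d k' l')).trace_eq_zero (isUnit_Ymat n) fun h => hl ?_
    exact (inv_mul_eq_one₀ (hε l)).1 h |>.symm

theorem injective_eps_inv_pow_succ (hn : n ≠ 0) (hcop : Nat.gcd d n = 1) :
    Function.Injective fun i : Fin n => (eps n d)⁻¹ ^ (i.1 + 1) := by
  intro i j hij
  simp only [pow_succ, mul_left_inj' (inv_ne_zero (eps_ne_zero n d))] at hij
  exact Fin.ext ((isPrimitiveRoot_eps hn hcop).inv.pow_inj i.2 j.2 hij)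

theorem linearIndependent_Zmat (hn : n ≠ 0) (hcop : Nat.gcd d n = 1) :
    LinearIndependent ℂ fun p : Fin n × Fin n => Zmat n d (p.1.1 + 1) (p.2.1 + 1) := by
  have hinj := injective_eps_inv_pow_succ hn hcop
  refine .of_pairwise_dual_eq_zero_one _ (fun p => traceLinearMap (Fin n) ℂ ℂ ∘ₗ
    LinearMap.mulLeft ℂ (Zdual n d (p.1.1 + 1) (p.2.1 + 1))) (fun p q hpq => ?_)
    fun p => trace_Zdual_mul_Zmat_self hn _ _
  refine trace_Zdual_mul_Zmat_of_ne ?_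
  contrapose! hpq
  exact Prod.ext (hinj hpq.1.symm) (hinj hpq.2.symm)

/-- The basis of `Mat_n(ℂ)` given by the `Z_{(k,l)}`; as in the theorem, the index
`(i, j) : Fin n × Fin n` stands for `(k, l) = (i + 1, j + 1)`. -/
def basisZmat (hn : n ≠ 0) (hcop : Nat.gcd d n = 1) :
    Basis (Fin n × Fin n) ℂ (Matrix (Fin n) (Fin n) ℂ) :=
  have : Nonempty (Fin n × Fin n) := ⟨(⟨0, Nat.pos_of_ne_zero hn⟩, ⟨0, Nat.pos_of_ne_zero hn⟩)⟩
  basisOfLinearIndependentOfCardEqFinrank (linearIndependent_Zmat hn hcop)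
    (by simp [Module.finrank_matrix])

@[simp]
theorem basisZmat_apply (hn : n ≠ 0) (hcop : Nat.gcd d n = 1) (p : Fin n × Fin n) :
    basisZmat hn hcop p = Zmat n d (p.1.1 + 1) (p.2.1 + 1) := by
  simp [basisZmat]

end ClockShift

section LinearAlgebra

theorem basis_repr_map_of_map_basis_eq_smul {ι R M : Type*} [CommSemiring R] [AddCommMonoid M]
    [Module R M] (b : Basis ι R M) {T : M →ₗ[R] M} {μ : ι → R} (hT : ∀ i, T (b i) = μ i • b i)
    (v : M) (i : ι) : b.repr (T v) i = μ i * b.repr v i := by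
  suffices b.coord i ∘ₗ T = μ i • b.coord i from LinearMap.congr_fun this v
  refine b.ext fun j => ?_
  by_cases hij : j = i <;> simp [hT, hij]

theorem existsUnique_eq_sum_smul_basis {ι α K V : Type*} [Fintype ι] [Field K] [AddCommGroup V]
    [Module K V] (b : Basis ι K V) {F : α → V} {f : ι → α → K} (hf : ∀ i, ∃ w, f i w ≠ 0)
    (hF : ∀ i, ∃ c, ∀ w, b.repr (F w) i = c * f i w) :
    ∃! c : ι → K, ∀ w, F w = ∑ i, c i • (f i w • b i) := by
  have eq_sum_iff (c : ι → K) (w : α) :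
      F w = ∑ i, c i • (f i w • b i) ↔ ∀ i, b.repr (F w) i = c i * f i w := by
    simp only [smul_smul, ← b.equivFun_symm_apply, ← b.equivFun_apply, ← funext_iff,
      LinearEquiv.eq_symm_apply]
  simp only [eq_sum_iff]
  choose c hc using hF
  refine ⟨c, fun w i => hc i w, fun c' hc' => funext fun i => ?_⟩
  obtain ⟨w, hw⟩ := hf i
  exact mul_right_cancel₀ hw ((hc' w i).symm.trans (hc i w))

theorem differentiable_linearMap_matrix {m n : Type*} [Finite m] [Finite n]
    (ℓ : Matrix m n ℂ →ₗ[ℂ] ℂ) {F : ℂ → Matrix m n ℂ}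
    (hF : ∀ i j, Differentiable ℂ fun w => F w i j) : Differentiable ℂ fun w => ℓ (F w) := by
  cases nonempty_fintype m
  cases nonempty_fintype n
  exact (ℓ ∘ₗ (ofLinearEquiv ℂ).toLinearMap).toContinuousLinearMap.differentiable.comp
    (differentiable_pi.2 fun i => differentiable_pi.2 (hF i))

end LinearAlgebra

section Fourier

theorem hasSum_fourierCoeff {T : ℝ} [Fact (0 < T)] {ι : Type*} {u : ι → C(AddCircle T, ℂ)}
    {f : C(AddCircle T, ℂ)} (hu : HasSum u f) (m : ℤ) :
    HasSum (fun i => fourierCoeff (u i) m) (fourierCoeff f m) := by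
  have := hu.mapL (innerSL ℂ (fourierBasis m) ∘L
    ContinuousMap.toLp (E := ℂ) 2 AddCircle.haarAddCircle ℂ)
  simpa only [ContinuousLinearMap.comp_apply, innerSL_apply_apply, ← HilbertBasis.repr_apply_apply,
    fourierBasis_repr, fourierCoeff_toLp] using this

theorem fourierCoeff_eq_of_hasSum {T : ℝ} [Fact (0 < T)] {a : ℤ → ℂ} {f : C(AddCircle T, ℂ)}
    (ha : HasSum (fun m => a m • fourier m) f) (m : ℤ) : fourierCoeff f m = a m := by
  refine (hasSum_fourierCoeff ha m).unique ?_
  simp only [ContinuousMap.coe_smul, fourierCoeff.const_smul, fourierCoeff_fourier]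
  simpa using hasSum_single (f := fun k => a k * (Pi.single k 1 : ℤ → ℂ) m) m (by simp_all)

theorem eq_of_eq_on_real {f g : ℂ → ℂ} (hf : Differentiable ℂ f) (hg : Differentiable ℂ g)
    (h : ∀ x : ℝ, f x = g x) : f = g := by
  have hreal : Filter.Tendsto ((↑) : ℝ → ℂ) (𝓝[≠] 0) (𝓝[≠] 0) := by
    refine tendsto_nhdsWithin_of_tendsto_nhds_of_eventually_within _
      ((continuous_ofReal.tendsto' 0 0 ofReal_zero).mono_left nhdsWithin_le_nhds) ?_
    exact eventually_mem_nhdsWithin.mono fun x hx => ofReal_ne_zero.2 hx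
  exact AnalyticOnNhd.eq_of_frequently_eq (fun z _ => hf.analyticAt z) (fun z _ => hg.analyticAt z)
    (hreal.frequently (Filter.Frequently.of_forall h))

/-- The restriction to the circle `ℝ/ℤ` of a continuous function on `ℂ` of period `1`. -/
def circleRestriction (h : ℂ → ℂ) (hc : Continuous h) (h1 : Function.Periodic h 1) :
    C(UnitAddCircle, ℂ) where
  toFun := Function.Periodic.lift (f := fun x : ℝ => h x) (c := 1) fun x => by
    simp only [ofReal_add, ofReal_one, h1 x]
  continuous_toFun := continuous_coinduced_dom.2 (hc.comp continuous_ofReal)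

variable {h : ℂ → ℂ}

theorem circleRestriction_coe (hc : Continuous h) (h1 : Function.Periodic h 1) (x : ℝ) :
    circleRestriction h hc h1 x = h x :=
  rfl

theorem integral_add_eq_of_periodic (hd : Differentiable ℂ h) (h1 : Function.Periodic h 1)
    (w : ℂ) : ∫ x in (0 : ℝ)..1, h (x + w) = ∫ x in (0 : ℝ)..1, h x := by
  obtain ⟨P, hP⟩ := hd.isExactOn_univ
  replace hP (z : ℂ) : HasDerivAt P (h z) z := hP z (Set.mem_univ z)
  have integral_eq (w : ℂ) : ∫ x in (0 : ℝ)..1, h (x + w) = P (w + 1) - P w := by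
    have hderiv (x : ℝ) : HasDerivAt (fun x : ℝ => P (x + w)) (h (x + w)) x :=
      ((hP (x + w)).comp_add_const (x : ℂ) w).comp_ofReal
    have hcont : Continuous fun x : ℝ => h (x + w) := by
      have := hd.continuous
      fun_prop
    rw [intervalIntegral.integral_eq_sub_of_hasDerivAt (fun x _ => hderiv x)
      (hcont.intervalIntegrable 0 1), ofReal_zero, ofReal_one, zero_add, add_comm 1 w]
  have hconst (z : ℂ) : HasDerivAt (fun z => P (z + 1) - P z) 0 z := by
    have := ((hP (z + 1)).comp_add_const z 1).sub (hP z)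
    rwa [h1 z, sub_self] at this
  have hw := is_const_of_deriv_eq_zero (fun z => (hconst z).differentiableAt)
    (fun z => (hconst z).deriv) w 0
  rw [integral_eq, hw, ← integral_eq]
  simp only [add_zero]

theorem fourierCoeff_circleRestriction (hd : Differentiable ℂ h) (h1 : Function.Periodic h 1)
    (m : ℤ) (w : ℂ) : fourierCoeff (circleRestriction h hd.continuous h1) m =
      ∫ x in (0 : ℝ)..1, exp (-(2 * π * I) * m * (x + w)) * h (x + w) := by
  have hper : Function.Periodic (fun z => exp (-(2 * π * I) * m * z) * h z) 1 := by
    intro z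
    have : -(2 * π * I) * m * (z + 1) = -(2 * π * I) * m * z + (-m : ℤ) * (2 * π * I) := by
      push_cast
      ring
    simp only [h1 z, this, exp_add, exp_int_mul_two_pi_mul_I, mul_one]
  rw [integral_add_eq_of_periodic (by fun_prop) hper, fourierCoeff_eq_intervalIntegral _ m 0]
  simp only [circleRestriction_coe, fourier_coe_apply, smul_eq_mul, zero_add, ofReal_one, div_one,
    one_smul]
  congr! 4
  push_cast
  ring

end Fourier

/-- The theta functions of degree one on `ℂ / (ℤ + τℤ)`: entire functions whose factor of
automorphy is the constant `e(-a)` along `1` and `e(-(w + b))` along `τ`, where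
`e(z) = exp(2πiz)`. -/
structure IsThetaFunction (τ a b : ℂ) (g : ℂ → ℂ) : Prop where
  differentiable : Differentiable ℂ g
  map_add_one : ∀ w, g (w + 1) = exp (-(2 * π * I) * a) * g w
  map_add_tau : ∀ w, g (w + τ) = exp (-(2 * π * I) * (w + b)) * g w

section Theta3

variable {τ : ℂ}

theorem theta3_eq_jacobiTheta₂ (τ z : ℂ) : theta3 τ z = jacobiTheta₂ z τ :=
  tsum_congr fun m => by rw [jacobiTheta₂_term]; ring_nf

theorem isThetaFunction_theta3 (hτ : 0 < τ.im) : IsThetaFunction τ 0 (τ / 2) (theta3 τ) where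
  differentiable := by
    simp only [funext (theta3_eq_jacobiTheta₂ τ)]
    exact fun z => differentiableAt_jacobiTheta₂_fst z hτ
  map_add_one z := by
    simp only [theta3_eq_jacobiTheta₂, jacobiTheta₂_add_left, mul_zero, exp_zero, one_mul]
  map_add_tau z := by
    simp only [theta3_eq_jacobiTheta₂, jacobiTheta₂_add_left']
    congr 2
    ring

theorem jacobiTheta₂_term_ofReal (m : ℤ) (x : ℝ) (τ : ℂ) :
    jacobiTheta₂_term m x τ = jacobiTheta₂_term m 0 τ * fourier m (x : UnitAddCircle) := by
  rw [fourier_coe_apply, jacobiTheta₂_term, jacobiTheta₂_term, ← exp_add]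
  congr 1
  push_cast
  ring

theorem exists_theta3_ne_zero (hτ : 0 < τ.im) : ∃ z, theta3 τ z ≠ 0 := by
  by_contra! hzero
  have hsum : Summable fun m => jacobiTheta₂_term m 0 τ • fourier (T := 1) m := by
    refine .of_norm ?_
    simpa only [norm_smul, fourier_norm, mul_one] using
      ((summable_jacobiTheta₂_term_iff 0 τ).2 hτ).norm
  have htsum : ∑' m, jacobiTheta₂_term m 0 τ • fourier (T := 1) m = 0 := by
    ext x
    induction x using QuotientAddGroup.induction_on with | H x => ?_
    rw [← ContinuousMap.tsum_apply hsum]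
    simp only [ContinuousMap.smul_apply, ContinuousMap.zero_apply, smul_eq_mul]
    simpa only [theta3_eq_jacobiTheta₂, jacobiTheta₂, jacobiTheta₂_term_ofReal] using hzero x
  have hcoeff := fourierCoeff_eq_of_hasSum (htsum ▸ hsum.hasSum) 0
  simp [fourierCoeff, jacobiTheta₂_term] at hcoeff

end Theta3

namespace IsThetaFunction

variable {τ a b : ℂ} {f g : ℂ → ℂ}

theorem exp_mul_comp_add (hg : IsThetaFunction τ a b g) (a' s : ℂ) :
    IsThetaFunction τ (a + a') (b + s + a' * τ)
      (fun w => exp (-(2 * π * I) * a' * w) * g (w + s)) where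
  differentiable := by
    have := hg.differentiable
    fun_prop
  map_add_one w := by
    simp only [add_right_comm w 1 s, hg.map_add_one, ← mul_assoc, ← exp_add]
    congr 2
    ring
  map_add_tau w := by
    simp only [add_right_comm w τ s, hg.map_add_tau, ← mul_assoc, ← exp_add]
    congr 2
    ring

theorem periodic (hg : IsThetaFunction τ 0 b g) : Function.Periodic g 1 := fun w => by
  rw [hg.map_add_one, mul_zero, exp_zero, one_mul]

theorem fourierCoeff_eq_exp_mul_fourierCoeff_add_one (hg : IsThetaFunction τ 0 (τ / 2) g) (m : ℤ) :
    fourierCoeff (circleRestriction g hg.differentiable.continuous hg.periodic) m =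
      exp (-(π * I * (2 * m + 1) * τ)) *
        fourierCoeff (circleRestriction g hg.differentiable.continuous hg.periodic) (m + 1) := by
  rw [fourierCoeff_circleRestriction hg.differentiable hg.periodic m τ,
    fourierCoeff_circleRestriction hg.differentiable hg.periodic (m + 1) 0,
    ← intervalIntegral.integral_const_mul]
  congr! 2
  simp only [hg.map_add_tau, add_zero, ← mul_assoc, ← exp_add]
  congr 2
  push_cast
  ring

theorem fourierCoeff_eq (hg : IsThetaFunction τ 0 (τ / 2) g) (m : ℤ) :
    fourierCoeff (circleRestriction g hg.differentiable.continuous hg.periodic) m =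
      fourierCoeff (circleRestriction g hg.differentiable.continuous hg.periodic) 0 *
        jacobiTheta₂_term m 0 τ := by
  set c := fourierCoeff (circleRestriction g hg.differentiable.continuous hg.periodic)
  have hc (m : ℤ) : c m = exp (-(π * I * (2 * m + 1) * τ)) * c (m + 1) :=
    hg.fourierCoeff_eq_exp_mul_fourierCoeff_add_one m
  have hstep (m : ℤ) : jacobiTheta₂_term m 0 τ =
      exp (-(π * I * (2 * m + 1) * τ)) * jacobiTheta₂_term (m + 1) 0 τ := by
    rw [jacobiTheta₂_term, jacobiTheta₂_term, ← exp_add]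
    congr 1
    push_cast
    ring
  have hiff (m : ℤ) : c m = c 0 * jacobiTheta₂_term m 0 τ ↔
      c (m + 1) = c 0 * jacobiTheta₂_term (m + 1) 0 τ := by
    rw [hc m, hstep m, mul_left_comm, mul_right_inj' (exp_ne_zero _)]
  induction m using Int.induction_on with
  | zero => simp [jacobiTheta₂_term]
  | succ m ih => exact (hiff m).1 ih
  | pred m ih => exact (hiff _).2 (by simpa using ih)

theorem exists_eq_const_mul_theta3 (hτ : 0 < τ.im) (hg : IsThetaFunction τ 0 (τ / 2) g) :
    ∃ c, ∀ w, g w = c * theta3 τ w := by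
  set G := circleRestriction g hg.differentiable.continuous hg.periodic
  have hcoeff : fourierCoeff G = fun m => fourierCoeff G 0 * jacobiTheta₂_term m 0 τ :=
    funext hg.fourierCoeff_eq
  have hsum : Summable (fourierCoeff G) := by
    rw [hcoeff]
    exact ((summable_jacobiTheta₂_term_iff 0 τ).2 hτ).mul_left _
  refine ⟨fourierCoeff G 0, congrFun (eq_of_eq_on_real hg.differentiable
    ((isThetaFunction_theta3 hτ).differentiable.const_mul _) fun x => ?_)⟩
  have hseries := has_pointwise_sum_fourier_series_of_summable hsum x
  rw [hcoeff] at hseries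
  simp only [smul_eq_mul, mul_assoc, ← jacobiTheta₂_term_ofReal] at hseries
  rw [theta3_eq_jacobiTheta₂]
  exact hseries.unique ((hasSum_jacobiTheta₂_term x hτ).mul_left _)

theorem exists_eq_const_mul (hτ : 0 < τ.im) (hf : IsThetaFunction τ a b f)
    (hg : IsThetaFunction τ a b g) (hf0 : ∃ w, f w ≠ 0) : ∃ c, ∀ w, g w = c * f w := by
  obtain ⟨s, hs⟩ : ∃ s, b + s + -a * τ = τ / 2 := ⟨τ / 2 - b + a * τ, by ring⟩
  have normalize {g : ℂ → ℂ} (hg : IsThetaFunction τ a b g) :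
      ∃ c, ∀ w, exp (-(2 * π * I) * -a * w) * g (w + s) = c * theta3 τ w :=
    exists_eq_const_mul_theta3 hτ <| by
      simpa only [hs, add_neg_cancel] using hg.exp_mul_comp_add (-a) s
  obtain ⟨cf, hcf⟩ := normalize hf
  obtain ⟨cg, hcg⟩ := normalize hg
  have hcf0 : cf ≠ 0 := by
    rintro rfl
    obtain ⟨w, hw⟩ := hf0
    simpa [exp_ne_zero, hw] using hcf (w - s)
  refine ⟨cg / cf, fun w => mul_left_cancel₀ (exp_ne_zero (-(2 * π * I) * -a * (w - s))) ?_⟩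
  have hf' := hcf (w - s)
  have hg' := hcg (w - s)
  rw [sub_add_cancel] at hf' hg'
  rw [hg', mul_left_comm, hf']
  field_simp

end IsThetaFunction

section Solutions

variable {n d : ℕ} {τ : ℂ}

theorem isThetaFunction_fTwist (n d : ℕ) (hτ : 0 < τ.im) (c : ℂ) (k l : ℕ) :
    IsThetaFunction τ (d * k / n) (1 / 2 + τ - c + d * l / n) (fTwist n d τ c k l) := by
  convert (isThetaFunction_theta3 hτ).exp_mul_comp_add (d * k / n)
    ((1 + τ) / 2 - c - d / n * (k * τ - l)) using 1
  · ring
  · ring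
  · ext w
    rw [fTwist]
    congr 2 <;> ring

theorem exists_fTwist_ne_zero (n d : ℕ) (hτ : 0 < τ.im) (c : ℂ) (k l : ℕ) :
    ∃ w, fTwist n d τ c k l w ≠ 0 := by
  obtain ⟨z, hz⟩ := exists_theta3_ne_zero hτ
  refine ⟨z - ((1 + τ) / 2 - c - d / n * (k * τ - l)), mul_ne_zero (exp_ne_zero _) ?_⟩
  convert hz using 2
  ring

theorem neg_exp_mul_eps_inv_pow (n d l : ℕ) (τ c w : ℂ) :
    -exp (-(2 * π * I) * (w + τ - c)) * (eps n d)⁻¹ ^ l =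
      exp (-(2 * π * I) * (w + (1 / 2 + τ - c + d * l / n))) := by
  rw [eps_inv_pow, ← mul_neg_one, ← exp_neg_pi_mul_I, ← exp_add, ← exp_add]
  congr 1
  ring

theorem solPred_fTwist_smul_Zmat (n d : ℕ) (hτ : 0 < τ.im) (c : ℂ) (k l : ℕ) :
    SolPred n d τ c fun w => fTwist n d τ c k l w • Zmat n d k l := by
  have hf := isThetaFunction_fTwist n d hτ c k l
  refine ⟨fun i j => ?_, fun w => ?_, fun w => ?_⟩
  · exact hf.differentiable.mul_const (Zmat n d k l i j)
  · simp only [mul_smul_comm, smul_mul_assoc,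
      (qCommute_Xmat_Zmat n d k l).conj_eq_smul (isUnit_Xmat n d), smul_smul, hf.map_add_one,
      eps_inv_pow]
    rw [mul_comm]
  · simp only [mul_smul_comm, smul_mul_assoc,
      (qCommute_Ymat_Zmat n d k l).conj_eq_smul (isUnit_Ymat n), smul_smul, hf.map_add_tau]
    rw [← neg_exp_mul_eps_inv_pow, mul_right_comm, mul_assoc]

variable {c : ℂ} {F : ℂ → Matrix (Fin n) (Fin n) ℂ}

theorem SolPred.isThetaFunction_repr (hF : SolPred n d τ c F) (hn : n ≠ 0)
    (hcop : Nat.gcd d n = 1) (p : Fin n × Fin n) :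
    IsThetaFunction τ (d * ↑(p.1.1 + 1) / n) (1 / 2 + τ - c + d * ↑(p.2.1 + 1) / n)
      fun w => (basisZmat hn hcop).repr (F w) p where
  differentiable := differentiable_linearMap_matrix ((basisZmat hn hcop).coord p) hF.1
  map_add_one w := by
    rw [hF.2.1, ← eps_inv_pow]
    refine basis_repr_map_of_map_basis_eq_smul (basisZmat hn hcop)
      (T := LinearMap.mulLeftRight ℂ (Xmat n d, (Xmat n d)⁻¹))
      (μ := fun p => (eps n d)⁻¹ ^ (p.1.1 + 1)) (fun q => ?_) (F w) p
    rw [LinearMap.mulLeftRight_apply, basisZmat_apply]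
    exact (qCommute_Xmat_Zmat n d _ _).conj_eq_smul (isUnit_Xmat n d)
  map_add_tau w := by
    rw [hF.2.2, ← neg_exp_mul_eps_inv_pow, map_smul, Finsupp.smul_apply, smul_eq_mul,
      mul_assoc (-exp _)]
    refine congrArg _ ?_
    refine basis_repr_map_of_map_basis_eq_smul (basisZmat hn hcop)
      (T := LinearMap.mulLeftRight ℂ (Ymat n, (Ymat n)⁻¹))
      (μ := fun p => (eps n d)⁻¹ ^ (p.2.1 + 1)) (fun q => ?_) (F w) p
    rw [LinearMap.mulLeftRight_apply, basisZmat_apply]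
    exact (qCommute_Ymat_Zmat n d _ _).conj_eq_smul (isUnit_Ymat n)

theorem SolPred.existsUnique_eq_sum (hF : SolPred n d τ c F) (hn : n ≠ 0)
    (hcop : Nat.gcd d n = 1) (hτ : 0 < τ.im) :
    ∃! lam : Fin n × Fin n → ℂ, ∀ w : ℂ, F w = ∑ p : Fin n × Fin n,
      lam p • (fTwist n d τ c (p.1.1 + 1) (p.2.1 + 1) w • Zmat n d (p.1.1 + 1) (p.2.1 + 1)) := by
  simp only [← basisZmat_apply hn hcop]
  have hne (p : Fin n × Fin n) := exists_fTwist_ne_zero n d hτ c (p.1.1 + 1) (p.2.1 + 1)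
  exact existsUnique_eq_sum_smul_basis (basisZmat hn hcop) hne fun p =>
    (isThetaFunction_fTwist n d hτ c _ _).exists_eq_const_mul hτ
      (hF.isThetaFunction_repr hn hcop p) (hne p)

end Solutions

theorem stmt12_general (n d : ℕ) (hn : n ≠ 0) (hcop : Nat.gcd d n = 1)
    (τ : ℂ) (hτ : 0 < τ.im) (c : ℂ) :
    (∀ p : Fin n × Fin n, SolPred n d τ c
        (fun w => fTwist n d τ c (p.1.1 + 1) (p.2.1 + 1) w • Zmat n d (p.1.1 + 1) (p.2.1 + 1))) ∧
    (∀ F : ℂ → Matrix (Fin n) (Fin n) ℂ, SolPred n d τ c F →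
      ∃! lam : Fin n × Fin n → ℂ, ∀ w : ℂ,
        F w = ∑ p : Fin n × Fin n,
          lam p • (fTwist n d τ c (p.1.1 + 1) (p.2.1 + 1) w •
            Zmat n d (p.1.1 + 1) (p.2.1 + 1))) :=
  ⟨fun p => solPred_fTwist_smul_Zmat n d hτ c (p.1.1 + 1) (p.2.1 + 1),
    fun _ hF => hF.existsUnique_eq_sum hn hcop hτ⟩

/-- Every matrix solution of the functional equations decomposes uniquely in the
basis `f_{(k,l)}(w) Z_{(k,l)}`; in particular the solution space has dimension `n²`. -/
theorem stmt12 (n d : ℕ) (hd : 0 < d) (hdn : d < n) (hcop : Nat.gcd d n = 1)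
    (τ : ℂ) (hτ : 0 < τ.im) (c : ℂ) :
    (∀ p : Fin n × Fin n, SolPred n d τ c
        (fun w => fTwist n d τ c (p.1.1 + 1) (p.2.1 + 1) w • Zmat n d (p.1.1 + 1) (p.2.1 + 1))) ∧
    (∀ F : ℂ → Matrix (Fin n) (Fin n) ℂ, SolPred n d τ c F →
      ∃! lam : Fin n × Fin n → ℂ, ∀ w : ℂ,
        F w = ∑ p : Fin n × Fin n,
          lam p • (fTwist n d τ c (p.1.1 + 1) (p.2.1 + 1) w •
            Zmat n d (p.1.1 + 1) (p.2.1 + 1))) :=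
  stmt12_general n d (Nat.ne_zero_of_lt hdn) hcop τ hτ c
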